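/- arXiv:2101.09246 — 6 statements merged into one kernel-verified Lean document; each statement's English description precedes it below -/
import Mathlib

section
/- Let 0 < a ≤ b be real numbers and let g : [0,b) → ℝ be a bounded concave function such that g(x) = x for all x ∈ [0,a). Then 3a·∫_0^b (2x − g(x))·g(x) dx ≤ 4·(∫_0^b g(x) dx)². -/
open MeasureTheory intervalIntegral

/-!
Put `u x = x - g x`, a convex function vanishing on `[0, a]`, and let `U`, `P` be the integrals of
`u`, `u²`. Since `(2x - g) g = x² - u²`, the claim reads `3a (b³/3 - P) ≤ 4 (b²/2 - U)²`. Let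
`h = b - a`. Among such `u` with `U` fixed, `P` is least for the linear one `ℓ = m (x - a)`, i.e.
`4 U² ≤ 3 h P`: monotonicity of `u x / (x - a)` gives `∫ (x - a) u ≥ (2h/3) U`, and then
`∫ (u - ℓ)² ≥ 0` gives the bound. Inserting it, the difference of the two sides of the claim is at
least `(b / h) (b h - 2 U)²`.
-/

lemma integral_sub_left_sq (a b : ℝ) : ∫ x in a..b, (x - a) ^ 2 = (b - a) ^ 3 / 3 := by
  rw [integral_comp_sub_right (fun x => x ^ 2) a, integral_pow]
  norm_num

lemma integral_sub_left (a b : ℝ) : ∫ x in a..b, (x - a) = (b - a) ^ 2 / 2 := by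
  rw [integral_comp_sub_right (fun x => x) a, integral_id]
  norm_num

section StarShaped

variable {u : ℝ → ℝ} {a b : ℝ}

lemma sub_mul_slope_eq_of_eq_zero (ha : u a = 0) (x : ℝ) : (x - a) * slope u a x = u x := by
  simpa [ha] using sub_smul_slope u a x

lemma mul_integral_le_integral_sub_mul_of_monotoneOn_slope (hab : a ≤ b)
    (hu : IntervalIntegrable u volume a b) (ha : u a = 0)
    (hmono : MonotoneOn (slope u a) (Set.Ioo a b)) :
    2 / 3 * (b - a) * ∫ x in a..b, u x ≤ ∫ x in a..b, (x - a) * u x := by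
  rcases hab.eq_or_lt with rfl | hlt
  · simp
  -- The barycentre of `[a, b]` for the weight `x - a`, so that `∫ (x - c) (x - a) = 0`.
  set c : ℝ := a + 2 / 3 * (b - a) with hc
  have hc_mem : c ∈ Set.Ioo a b := ⟨by linarith, by linarith⟩
  have hpointwise : ∀ x ∈ Set.Ioo a b,
      slope u a c * ((x - a) ^ 2 - 2 / 3 * (b - a) * (x - a)) ≤
        (x - a) * u x - 2 / 3 * (b - a) * u x := by
    intro x hx
    have hslope : 0 ≤ (x - c) * (slope u a x - slope u a c) := by
      rcases le_total x c with hxc | hcx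
      · exact mul_nonneg_of_nonpos_of_nonpos (sub_nonpos.2 hxc)
          (sub_nonpos.2 (hmono hx hc_mem hxc))
      · exact mul_nonneg (sub_nonneg.2 hcx) (sub_nonneg.2 (hmono hc_mem hx hcx))
    have hweighted := mul_nonneg (sub_nonneg.2 hx.1.le) hslope
    rw [← sub_mul_slope_eq_of_eq_zero ha x]
    linear_combination hweighted + (x - a) * (slope u a x - slope u a c) * hc
  have hmoment : IntervalIntegrable (fun x => (x - a) * u x) volume a b :=
    hu.continuousOn_mul (by fun_prop)
  have hintegral := integral_mono_on_of_le_Ioo hab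
    (Continuous.intervalIntegrable (by fun_prop) a b)
    (hmoment.sub (hu.const_mul (2 / 3 * (b - a)))) hpointwise
  rw [integral_sub hmoment (hu.const_mul _), intervalIntegral.integral_const_mul,
    intervalIntegral.integral_const_mul,
    integral_sub (Continuous.intervalIntegrable (by fun_prop) _ _)
      (Continuous.intervalIntegrable (by fun_prop) _ _),
    intervalIntegral.integral_const_mul, integral_sub_left, integral_sub_left_sq] at hintegral
  linear_combination hintegral

lemma sq_integral_le_of_monotoneOn_slope (hab : a ≤ b) (hu : IntervalIntegrable u volume a b)
    (hu_sq : IntervalIntegrable (fun x => u x ^ 2) volume a b) (ha : u a = 0)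
    (hmono : MonotoneOn (slope u a) (Set.Ioo a b)) (hU : 0 ≤ ∫ x in a..b, u x) :
    4 * (∫ x in a..b, u x) ^ 2 ≤ 3 * (b - a) * ∫ x in a..b, u x ^ 2 := by
  rcases hab.eq_or_lt with rfl | hlt
  · simp
  have hmoment_le := mul_integral_le_integral_sub_mul_of_monotoneOn_slope hab hu ha hmono
  set U := ∫ x in a..b, u x
  -- The slope of the linear function vanishing at `a` with the same integral as `u`.
  set m : ℝ := 2 * U / (b - a) ^ 2
  have hba : b - a ≠ 0 := (sub_pos.2 hlt).ne'
  have hmU : m * (b - a) ^ 2 = 2 * U := div_mul_cancel₀ _ (pow_ne_zero 2 hba)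
  have hmoment : IntervalIntegrable (fun x => (x - a) * u x) volume a b :=
    hu.continuousOn_mul (by fun_prop)
  have hexpand : ∫ x in a..b, (u x - m * (x - a)) ^ 2 =
      (∫ x in a..b, u x ^ 2) - 2 * m * (∫ x in a..b, (x - a) * u x)
        + m ^ 2 * ((b - a) ^ 3 / 3) := by
    rw [← integral_sub_left_sq, ← intervalIntegral.integral_const_mul,
      ← intervalIntegral.integral_const_mul, ← integral_sub hu_sq (hmoment.const_mul _),
      ← integral_add (hu_sq.sub (hmoment.const_mul _))
        (Continuous.intervalIntegrable (by fun_prop) _ _)]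
    congr 1 with x
    ring
  have hsq : 0 ≤ ∫ x in a..b, (u x - m * (x - a)) ^ 2 :=
    integral_nonneg hab fun _ _ => sq_nonneg _
  have hm_nonneg : 0 ≤ m := by positivity
  have hm_moment := mul_le_mul_of_nonneg_left hmoment_le hm_nonneg
  have hlower : 2 / 3 * (b - a) * (m * U) ≤ ∫ x in a..b, u x ^ 2 := by
    linear_combination hsq + hexpand + 2 * hm_moment + m * (b - a) / 3 * hmU
  calc 4 * U ^ 2 = 3 * (b - a) * (2 / 3 * (b - a) * (m * U)) := by
        linear_combination -2 * U * hmU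
    _ ≤ 3 * (b - a) * ∫ x in a..b, u x ^ 2 := by gcongr

end StarShaped

lemma integral_eq_integral_of_eqOn_zero {E : Type*} [NormedAddCommGroup E] [NormedSpace ℝ E]
    {f : ℝ → E} {a b c : ℝ} (hab : a ≤ b) (hbc : b ≤ c) (hf : Set.EqOn f 0 (Set.Icc a b)) :
    ∫ x in a..c, f x = ∫ x in b..c, f x := by
  rw [integral_of_le (hab.trans hbc), integral_of_le hbc]
  refine setIntegral_eq_of_subset_of_forall_sdiff_eq_zero measurableSet_Ioc
    (Set.Ioc_subset_Ioc_left hab) fun x hx => hf ⟨hx.1.1.le, ?_⟩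
  exact not_lt.1 fun hbx => hx.2 ⟨hbx, hx.1.2⟩

lemma sq_integral_le_of_convexOn_of_eqOn_zero {u : ℝ → ℝ} {a b c : ℝ} (hab : a < b) (hbc : b < c)
    (hconv : ConvexOn ℝ (Set.Ico a c) u) (hzero : Set.EqOn u 0 (Set.Icc a b))
    (hu : IntervalIntegrable u volume a c)
    (hu_sq : IntervalIntegrable (fun x => u x ^ 2) volume a c) :
    4 * (∫ x in a..c, u x) ^ 2 ≤ 3 * (c - b) * ∫ x in a..c, u x ^ 2 := by
  have hub : u b = 0 := hzero ⟨hab.le, le_rfl⟩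
  have hslope : MonotoneOn (slope u b) (Set.Ico a c \ {b}) := hconv.slope_mono ⟨hab.le, hbc⟩
  have hIoo : Set.Ioo b c ⊆ Set.Ico a c \ {b} := fun x hx => ⟨⟨(hab.trans hx.1).le, hx.2⟩, hx.1.ne'⟩
  have hnonneg : ∀ x ∈ Set.Ioo b c, 0 ≤ u x := by
    intro x hx
    have hslope_a : slope u b a = 0 := by
      simp [slope_def_field, hub, hzero (Set.left_mem_Icc.2 hab.le)]
    have hslope_x : 0 ≤ slope u b x := by
      rw [← hslope_a]
      exact hslope ⟨⟨le_rfl, hab.trans hbc⟩, hab.ne⟩ (hIoo hx) (hab.trans hx.1).le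
    rw [← sub_mul_slope_eq_of_eq_zero hub x]
    exact mul_nonneg (sub_nonneg.2 hx.1.le) hslope_x
  have hsub : Set.uIcc b c ⊆ Set.uIcc a c :=
    Set.uIcc_subset_uIcc_right (Set.mem_uIcc_of_le hab.le hbc.le)
  rw [integral_eq_integral_of_eqOn_zero hab.le hbc.le hzero,
    integral_eq_integral_of_eqOn_zero (f := fun x => u x ^ 2) hab.le hbc.le
      fun x hx => by simp [hzero hx]]
  refine sq_integral_le_of_monotoneOn_slope hbc.le (hu.mono_set hsub) (hu_sq.mono_set hsub) hub
    (hslope.mono hIoo) ?_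
  rw [integral_of_le hbc.le, integral_Ioc_eq_integral_Ioo]
  exact setIntegral_nonneg measurableSet_Ioo hnonneg

section Deficit

variable {g : ℝ → ℝ} {a b : ℝ}

lemma intervalIntegrable_self_sub_sq (hg : IntervalIntegrable g volume a b)
    (hg_sq : IntervalIntegrable (fun x => g x ^ 2) volume a b) :
    IntervalIntegrable (fun x => (x - g x) ^ 2) volume a b := by
  have hcross : IntervalIntegrable (fun x => 2 * x * g x) volume a b :=
    hg.continuousOn_mul (by fun_prop)
  refine ((((continuous_pow 2).intervalIntegrable a b).sub hcross).add hg_sq).congr fun x _ => ?_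
  ring

lemma integral_self_sub (hg : IntervalIntegrable g volume a b) :
    ∫ x in a..b, (x - g x) = (b ^ 2 - a ^ 2) / 2 - ∫ x in a..b, g x := by
  rw [integral_sub intervalIntegrable_id hg, integral_id]

lemma integral_two_mul_sub_mul_self (hg : IntervalIntegrable g volume a b)
    (hg_sq : IntervalIntegrable (fun x => g x ^ 2) volume a b) :
    ∫ x in a..b, (2 * x - g x) * g x =
      (b ^ 3 - a ^ 3) / 3 - ∫ x in a..b, (x - g x) ^ 2 := by
  have hpow : ∫ x in a..b, x ^ 2 = (b ^ 3 - a ^ 3) / 3 := by rw [integral_pow]; norm_num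
  rw [← hpow, ← integral_sub ((continuous_pow 2).intervalIntegrable a b)
    (intervalIntegrable_self_sub_sq hg hg_sq)]
  congr 1 with x
  ring

lemma mul_integral_le_sq_integral_of_concaveOn_of_eqOn_id (ha : 0 < a) (hab : a < b)
    (hconc : ConcaveOn ℝ (Set.Ico 0 b) g) (hga : Set.EqOn g id (Set.Icc 0 a))
    (hg : IntervalIntegrable g volume 0 b)
    (hg_sq : IntervalIntegrable (fun x => g x ^ 2) volume 0 b) :
    3 * a * ∫ x in (0 : ℝ)..b, (2 * x - g x) * g x ≤ 4 * (∫ x in (0 : ℝ)..b, g x) ^ 2 := by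
  have hdeficit := sq_integral_le_of_convexOn_of_eqOn_zero (u := fun x => x - g x) ha hab
    ((convexOn_id (convex_Ico 0 b)).sub hconc) (fun x hx => sub_eq_zero.2 (hga hx).symm)
    (intervalIntegrable_id.sub hg) (intervalIntegrable_self_sub_sq hg hg_sq)
  rw [integral_self_sub hg] at hdeficit
  rw [integral_two_mul_sub_mul_self hg hg_sq]
  set G := ∫ x in (0 : ℝ)..b, g x
  have hsq : 0 ≤ b * (2 * G - a * b) ^ 2 := mul_nonneg (ha.trans hab).le (sq_nonneg _)
  refine le_of_mul_le_mul_left ?_ (sub_pos.2 hab)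
  linear_combination hsq + a * hdeficit

end Deficit

lemma memLp_of_concaveOn_Ico_of_abs_le {a b M : ℝ} {g : ℝ → ℝ} (p : ENNReal)
    (hconc : ConcaveOn ℝ (Set.Ico a b) g) (hM : ∀ x ∈ Set.Ico a b, |g x| ≤ M) :
    MemLp g p (volume.restrict (Set.Ico a b)) := by
  have hcont : ContinuousOn g (Set.Ioo a b) := interior_Ico (a := a) ▸ hconc.continuousOn_interior
  have hmeas : AEStronglyMeasurable g (volume.restrict (Set.Ico a b)) :=
    restrict_Ioo_eq_restrict_Ico (a := a) (b := b) (μ := volume) ▸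
      hcont.aestronglyMeasurable measurableSet_Ioo
  exact .of_bound hmeas M (ae_restrict_of_forall_mem measurableSet_Ico hM)

theorem stmt_0_general {a b : ℝ} (ha : 0 < a) (hab : a ≤ b) {g : ℝ → ℝ}
    (hconc : ConcaveOn ℝ (Set.Ico 0 b) g) (hg : MemLp g 2 (volume.restrict (Set.Ico 0 b)))
    (hga : ∀ x ∈ Set.Ico (0 : ℝ) a, g x = x) :
    3 * a * ∫ x in (0 : ℝ)..b, (2 * x - g x) * g x ≤
      4 * (∫ x in (0 : ℝ)..b, g x) ^ 2 := by
  have hb : 0 ≤ b := ha.le.trans hab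
  have hg_int : IntervalIntegrable g volume 0 b :=
    (intervalIntegrable_iff_integrableOn_Ico_of_le hb).2 (hg.integrable one_le_two)
  have hg_sq : IntervalIntegrable (fun x => g x ^ 2) volume 0 b :=
    (intervalIntegrable_iff_integrableOn_Ico_of_le hb).2 hg.integrable_sq
  -- Letting `p` increase to `a` covers `a = b` and avoids proving `g a = a`.
  have hbelow : ∀ p ∈ Set.Ioo 0 a, 3 * p * ∫ x in (0 : ℝ)..b, (2 * x - g x) * g x ≤
      4 * (∫ x in (0 : ℝ)..b, g x) ^ 2 := fun p hp =>
    mul_integral_le_sq_integral_of_concaveOn_of_eqOn_id hp.1 (hp.2.trans_le hab) hconc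
      (fun x hx => hga x ⟨hx.1, hx.2.trans_lt hp.2⟩) hg_int hg_sq
  have hlim : Filter.Tendsto (fun p => 3 * p * ∫ x in (0 : ℝ)..b, (2 * x - g x) * g x)
      (nhdsWithin a (Set.Iio a)) (nhds (3 * a * ∫ x in (0 : ℝ)..b, (2 * x - g x) * g x)) :=
    Continuous.continuousWithinAt (by fun_prop)
  exact le_of_tendsto hlim (Filter.eventually_of_mem (Ioo_mem_nhdsLT ha) hbelow)

/-- Lemma 3.3 (inequality part): for `0 < a ≤ b` and a bounded concave function
`g` on `[0, b)` with `g x = x` on `[0, a)`, we have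
`3a·∫_0^b (2x − g x)·g x dx ≤ 4·(∫_0^b g x dx)²`. -/
theorem stmt_0 (a b : ℝ) (ha : 0 < a) (hab : a ≤ b) (g : ℝ → ℝ)
    (hconc : ConcaveOn ℝ (Set.Ico 0 b) g)
    (hbdd : ∃ M : ℝ, ∀ x ∈ Set.Ico (0 : ℝ) b, |g x| ≤ M)
    (hga : ∀ x ∈ Set.Ico (0 : ℝ) a, g x = x) :
    3 * a * ∫ x in (0 : ℝ)..b, (2 * x - g x) * g x ≤
      4 * (∫ x in (0 : ℝ)..b, g x) ^ 2 := by
  obtain ⟨M, hM⟩ := hbdd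
  exact stmt_0_general ha hab hconc (memLp_of_concaveOn_Ico_of_abs_le 2 hconc hM) hga
end

section
/- Let 0 < a ≤ b be real numbers and let g : [0,b) → ℝ be a bounded concave function such that g(x) = x for all x ∈ [0,a). If 3a·∫_0^b (2x − g(x))·g(x) dx = 4·(∫_0^b g(x) dx)², then ∫_0^b g(x) dx = ab/2. -/
open MeasureTheory intervalIntegral

/-!
The function `h x = x - g x` is convex and vanishes on `[0, a)`, and `(2 * x - g x) * g x` equals
`x ^ 2 - h x ^ 2`. From each zero `t < a` on, the slope `h x / (x - t)` is nondecreasing, so the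
first moment `∫ (x - t) * h x` over `[t, b]` is at least what it would be for a linear function with
the same integral. With the Cauchy–Schwarz inequality this gives
`4 * (∫ h) ^ 2 ≤ 3 * (b - t) * ∫ h ^ 2`, and `t` may be replaced by its limit `a`.

Written in terms of `G = ∫ g` and `F = ∫ (2 * x - g x) * g x`, this bound completes a square:
`b * (2 * G - a * b) ^ 2 ≤ (b - a) * (4 * G ^ 2 - 3 * a * F)`.
-/

lemma memLp_of_concaveOn_of_bounded {E : Type*} [NormedAddCommGroup E] [NormedSpace ℝ E]
    [FiniteDimensional ℝ E] [MeasurableSpace E] [BorelSpace E] {μ : Measure E}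
    [μ.IsAddHaarMeasure] {s : Set E} {f : E → ℝ} {M : ℝ} (p : ENNReal) (hμs : μ s ≠ ⊤)
    (hf : ConcaveOn ℝ s f) (hM : ∀ x ∈ s, |f x| ≤ M) : MemLp f p (μ.restrict s) := by
  have hcont : ContinuousOn f (interior s) :=
    (hf.subset interior_subset hf.1.interior).continuousOn isOpen_interior
  rw [← Measure.restrict_congr_set (interior_ae_eq_of_null_frontier (hf.1.addHaar_frontier μ))]
  have : IsFiniteMeasure (μ.restrict (interior s)) :=
    isFiniteMeasure_restrict.2 (measure_ne_top_of_subset interior_subset hμs)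
  refine MemLp.of_bound (hcont.aestronglyMeasurable isOpen_interior.measurableSet) M ?_
  filter_upwards [ae_restrict_mem isOpen_interior.measurableSet] with x hx
  exact hM x (interior_subset hx)

lemma memLp_id_restrict_Ico (p : ENNReal) (a b : ℝ) :
    MemLp (fun x : ℝ => x) p (volume.restrict (Set.Ico a b)) :=
  ((monotone_id.monotoneOn _).memLp_isCompact isCompact_Icc).mono_measure
    (Measure.restrict_mono Set.Ico_subset_Icc_self le_rfl)

lemma intervalIntegral_eq_setIntegral_Ico {E : Type*} [NormedAddCommGroup E] [NormedSpace ℝ E]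
    {a b : ℝ} (hab : a ≤ b) (f : ℝ → E) : ∫ x in a..b, f x = ∫ x in Set.Ico a b, f x := by
  rw [integral_of_le hab, integral_Ico_eq_integral_Ioc]

lemma intervalIntegral_eq_of_eqOn_zero {E : Type*} [NormedAddCommGroup E] [NormedSpace ℝ E]
    {c a b : ℝ} (hca : c ≤ a) (hab : a ≤ b) {f : ℝ → E} (hf : Set.EqOn f 0 (Set.Ico c a)) :
    ∫ x in c..b, f x = ∫ x in a..b, f x := by
  rw [intervalIntegral_eq_setIntegral_Ico hab, intervalIntegral_eq_setIntegral_Ico (hca.trans hab)]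
  exact setIntegral_eq_of_subset_of_forall_sdiff_eq_zero measurableSet_Ico
    (Set.Ico_subset_Ico_left hca) fun x hx => hf ⟨hx.1.1, not_le.1 fun hax => hx.2 ⟨hax, hx.1.2⟩⟩

lemma sq_integral_mul_le {α : Type*} [MeasurableSpace α] {μ : Measure α} {f g : α → ℝ}
    (hf : MemLp f 2 μ) (hg : MemLp g 2 μ) :
    (∫ x, f x * g x ∂μ) ^ 2 ≤ (∫ x, f x ^ 2 ∂μ) * ∫ x, g x ^ 2 ∂μ := by
  have inner_toLp : ∀ {u v : α → ℝ} (hu : MemLp u 2 μ) (hv : MemLp v 2 μ),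
      inner ℝ (hu.toLp u) (hv.toLp v) = ∫ x, u x * v x ∂μ := by
    intro u v hu hv
    rw [L2.inner_def]
    apply MeasureTheory.integral_congr_ae
    filter_upwards [hu.coeFn_toLp, hv.coeFn_toLp] with x hux hvx
    rw [hux, hvx, real_inner_eq_re_inner, RCLike.inner_apply]
    simp [mul_comm]
  simpa only [inner_toLp, sq] using real_inner_mul_inner_self_le (hf.toLp f) (hg.toLp g)

section Convex

lemma nonneg_of_convexOn_of_eqOn_zero {c a b : ℝ} (hca : c < a) {f : ℝ → ℝ}
    (hf : ConvexOn ℝ (Set.Ico c b) f) (hzero : Set.EqOn f 0 (Set.Ico c a)) {x : ℝ}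
    (hx : x ∈ Set.Ico c b) : 0 ≤ f x := by
  rcases lt_or_ge x a with hxa | hax
  · exact (hzero ⟨hx.1, hxa⟩).ge
  obtain ⟨y, hcy, hya⟩ := exists_between hca
  have hfc : f c = 0 := hzero ⟨le_rfl, hca⟩
  have hfy : f y = 0 := hzero ⟨hcy.le, hya⟩
  have hyx : f y ≤ f x := hf.le_right_of_left_le'' ⟨le_rfl, hx.1.trans_lt hx.2⟩ hx hcy
    (hya.le.trans hax) (hfc.trans hfy.symm).le
  exact hfy ▸ hyx

variable {a b : ℝ} {f : ℝ → ℝ}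

lemma slope_mul_le_of_convexOn {s : Set ℝ} (hf : ConvexOn ℝ s f) {c x : ℝ} (ha : a ∈ s)
    (hc : c ∈ s) (hx : x ∈ s) (hac : a < c) (hax : a < x) :
    slope f a c * ((x - a) * (x - c)) ≤ (x - c) * (f x - f a) := by
  have hmono := hf.slope_mono ha
  have hslope : 0 ≤ (slope f a x - slope f a c) * (x - c) := by
    rcases le_total x c with hxc | hcx
    · exact mul_nonneg_of_nonpos_of_nonpos
        (sub_nonpos.2 (hmono ⟨hx, hax.ne'⟩ ⟨hc, hac.ne'⟩ hxc)) (sub_nonpos.2 hxc)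
    · exact mul_nonneg
        (sub_nonneg.2 (hmono ⟨hc, hac.ne'⟩ ⟨hx, hax.ne'⟩ hcx)) (sub_nonneg.2 hcx)
  have hfx : f x - f a = (x - a) * slope f a x := (sub_smul_slope f a x).symm
  rw [hfx]
  linear_combination (x - a) * hslope

lemma two_mul_integral_le_three_mul_integral_of_convexOn (hab : a < b)
    (hf : ConvexOn ℝ (Set.Ico a b) f) (hint : IntervalIntegrable f volume a b) :
    2 * (b - a) * ∫ x in a..b, (f x - f a) ≤ 3 * ∫ x in a..b, (x - a) * (f x - f a) := by
  -- `c` is the barycentre of `[a, b]` for the weight `x - a`.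
  set c := (a + 2 * b) / 3 with hc
  have hac : a < c := by linarith
  have hcb : c < b := by linarith
  have hdiff : IntervalIntegrable (fun x => f x - f a) volume a b :=
    hint.sub intervalIntegrable_const
  have hbalance : ∫ x in a..b, (x - a) * (x - c) = 0 := by
    have hexpand : ∀ x : ℝ, (x - a) * (x - c) = (x - a) ^ 2 - (c - a) * (x - a) :=
      fun x => by ring
    simp only [hexpand]
    rw [integral_comp_sub_right (fun u => u ^ 2 - (c - a) * u) a,
      intervalIntegral.integral_sub (by simp) (Continuous.intervalIntegrable (by fun_prop) _ _),
      intervalIntegral.integral_const_mul, integral_pow, integral_id, hc]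
    push_cast
    ring
  have hmoment : 0 ≤ ∫ x in a..b, (x - c) * (f x - f a) := by
    have hmono := integral_mono_on_of_le_Ioo hab.le
      (Continuous.intervalIntegrable (by fun_prop) _ _)
      (hdiff.continuousOn_mul (g := fun x => x - c) (by fun_prop))
      fun x hx => slope_mul_le_of_convexOn hf ⟨le_rfl, hab⟩ ⟨hac.le, hcb⟩
        (Set.Ioo_subset_Ico_self hx) hac hx.1
    rwa [intervalIntegral.integral_const_mul, hbalance, mul_zero] at hmono
  have hsplit : ∫ x in a..b, (x - c) * (f x - f a) =
      (∫ x in a..b, (x - a) * (f x - f a)) - (c - a) * ∫ x in a..b, (f x - f a) := by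
    rw [← intervalIntegral.integral_const_mul, ← intervalIntegral.integral_sub
      (hdiff.continuousOn_mul (g := fun x => x - a) (by fun_prop)) (hdiff.const_mul _)]
    exact integral_congr fun x _ => by ring
  rw [hsplit, hc] at hmoment
  linarith

lemma four_mul_sq_integral_le_of_convexOn (hab : a < b) (hf : ConvexOn ℝ (Set.Ico a b) f)
    (hL2 : MemLp f 2 (volume.restrict (Set.Ico a b))) (hfa : f a = 0)
    (hnonneg : 0 ≤ ∫ x in a..b, f x) :
    4 * (∫ x in a..b, f x) ^ 2 ≤ 3 * (b - a) * ∫ x in a..b, f x ^ 2 := by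
  have hlen : 0 < b - a := sub_pos.2 hab
  have hint : IntervalIntegrable f volume a b :=
    (intervalIntegrable_iff_integrableOn_Ico_of_le hab.le).2 (hL2.integrable one_le_two)
  have hmoment : 2 * (b - a) * ∫ x in a..b, f x ≤ 3 * ∫ x in a..b, (x - a) * f x := by
    simpa only [hfa, sub_zero] using two_mul_integral_le_three_mul_integral_of_convexOn hab hf hint
  have hlinear : ∫ x in a..b, (x - a) ^ 2 = (b - a) ^ 3 / 3 := by
    rw [integral_comp_sub_right (fun u => u ^ 2) a, integral_pow]
    push_cast
    ring
  have hcauchy : (∫ x in a..b, (x - a) * f x) ^ 2 ≤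
      (b - a) ^ 3 / 3 * ∫ x in a..b, f x ^ 2 := by
    rw [← hlinear]
    simpa only [intervalIntegral_eq_setIntegral_Ico hab.le, Pi.sub_apply] using
      sq_integral_mul_le ((memLp_id_restrict_Ico 2 a b).sub (memLp_const a)) hL2
  refine le_of_mul_le_mul_left ?_ (pow_pos hlen 2)
  calc (b - a) ^ 2 * (4 * (∫ x in a..b, f x) ^ 2)
      = (2 * (b - a) * ∫ x in a..b, f x) ^ 2 := by ring
    _ ≤ (3 * ∫ x in a..b, (x - a) * f x) ^ 2 := by gcongr
    _ = 9 * (∫ x in a..b, (x - a) * f x) ^ 2 := by ring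
    _ ≤ 9 * ((b - a) ^ 3 / 3 * ∫ x in a..b, f x ^ 2) := by gcongr
    _ = (b - a) ^ 2 * (3 * (b - a) * ∫ x in a..b, f x ^ 2) := by ring

lemma four_mul_sq_integral_le_of_convexOn_of_eqOn_zero {c : ℝ} (hca : c < a) (hab : a ≤ b)
    (hf : ConvexOn ℝ (Set.Ico c b) f) (hL2 : MemLp f 2 (volume.restrict (Set.Ico c b)))
    (hzero : Set.EqOn f 0 (Set.Ico c a)) :
    4 * (∫ x in c..b, f x) ^ 2 ≤ 3 * (b - a) * ∫ x in c..b, f x ^ 2 := by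
  have hlim : Filter.Tendsto (fun t => 3 * (b - t) * ∫ x in c..b, f x ^ 2)
      (nhdsWithin a (Set.Iio a)) (nhds (3 * (b - a) * ∫ x in c..b, f x ^ 2)) :=
    (Continuous.tendsto (by fun_prop) a).mono_left nhdsWithin_le_nhds
  refine ge_of_tendsto hlim ?_
  filter_upwards [Ioo_mem_nhdsLT hca] with t ⟨hct, hta⟩
  have htb : t < b := hta.trans_le hab
  have hzero_t : Set.EqOn f 0 (Set.Ico c t) := hzero.mono (Set.Ico_subset_Ico_right hta.le)
  have hsub : Set.Ico t b ⊆ Set.Ico c b := Set.Ico_subset_Ico_left hct.le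
  rw [intervalIntegral_eq_of_eqOn_zero hct.le htb.le hzero_t, intervalIntegral_eq_of_eqOn_zero
    (f := fun x => f x ^ 2) hct.le htb.le fun x hx => by simp [hzero_t hx]]
  refine four_mul_sq_integral_le_of_convexOn htb (hf.subset hsub (convex_Ico t b))
    (hL2.mono_measure (Measure.restrict_mono hsub le_rfl)) (hzero ⟨hct.le, hta⟩) ?_
  rw [intervalIntegral_eq_setIntegral_Ico htb.le]
  exact setIntegral_nonneg measurableSet_Ico fun x hx =>
    nonneg_of_convexOn_of_eqOn_zero hca hf hzero (hsub hx)

end Convex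

section Concave

variable {a b : ℝ} {g : ℝ → ℝ}

lemma mul_sq_two_mul_integral_sub_le_of_concaveOn (ha : 0 < a) (hab : a ≤ b)
    (hconc : ConcaveOn ℝ (Set.Ico 0 b) g) (hL2 : MemLp g 2 (volume.restrict (Set.Ico 0 b)))
    (hga : ∀ x ∈ Set.Ico (0 : ℝ) a, g x = x) :
    b * (2 * (∫ x in (0 : ℝ)..b, g x) - a * b) ^ 2 ≤
      (b - a) * (4 * (∫ x in (0 : ℝ)..b, g x) ^ 2 -
        3 * a * ∫ x in (0 : ℝ)..b, (2 * x - g x) * g x) := by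
  have hb : 0 ≤ b := ha.le.trans hab
  have hid : MemLp (fun x : ℝ => x) 2 (volume.restrict (Set.Ico 0 b)) :=
    memLp_id_restrict_Ico 2 0 b
  have hintegrable {u : ℝ → ℝ} (hu : IntegrableOn u (Set.Ico 0 b)) :
      IntervalIntegrable u volume 0 b :=
    (intervalIntegrable_iff_integrableOn_Ico_of_le hb).2 hu
  have hproduct : IntervalIntegrable (fun x => (2 * x - g x) * g x) volume 0 b :=
    hintegrable (((hid.const_mul 2).sub hL2).integrable_mul hL2)
  have hdefect := four_mul_sq_integral_le_of_convexOn_of_eqOn_zero ha hab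
    ((convexOn_id (convex_Ico 0 b)).sub hconc) (hid.sub hL2)
    fun x hx => sub_eq_zero.2 (hga x hx).symm
  have hfirst : ∫ x in (0 : ℝ)..b, (x - g x) = b ^ 2 / 2 - ∫ x in (0 : ℝ)..b, g x := by
    rw [intervalIntegral.integral_sub intervalIntegrable_id
      (hintegrable (hL2.integrable one_le_two)), integral_id]
    ring
  have hsecond : ∫ x in (0 : ℝ)..b, (x - g x) ^ 2 =
      b ^ 3 / 3 - ∫ x in (0 : ℝ)..b, (2 * x - g x) * g x := by
    have hexpand : ∀ x, (x - g x) ^ 2 = x ^ 2 - (2 * x - g x) * g x := fun x => by ring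
    simp only [hexpand]
    rw [intervalIntegral.integral_sub (by simp) hproduct, integral_pow]
    norm_num
  simp only [Pi.sub_apply, id_eq, hfirst, hsecond] at hdefect
  linear_combination a * hdefect

theorem stmt_2_general (ha : 0 < a) (hab : a ≤ b) (hconc : ConcaveOn ℝ (Set.Ico 0 b) g)
    (hL2 : MemLp g 2 (volume.restrict (Set.Ico 0 b)))
    (hga : ∀ x ∈ Set.Ico (0 : ℝ) a, g x = x)
    (heq : 3 * a * ∫ x in (0 : ℝ)..b, (2 * x - g x) * g x =
      4 * (∫ x in (0 : ℝ)..b, g x) ^ 2) :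
    ∫ x in (0 : ℝ)..b, g x = a * b / 2 := by
  have hbound := mul_sq_two_mul_integral_sub_le_of_concaveOn ha hab hconc hL2 hga
  rw [heq, sub_self, mul_zero] at hbound
  have hsq : (2 * (∫ x in (0 : ℝ)..b, g x) - a * b) ^ 2 ≤ 0 :=
    nonpos_of_mul_nonpos_right hbound (ha.trans_le hab)
  linarith [(sq_nonpos_iff _).1 hsq]

end Concave

/-- Lemma 3.3 (final assertion): in the equality case of
`3a·∫_0^b (2x − g x)·g x dx ≤ 4·(∫_0^b g x dx)²`, the integral of `g` is `ab/2`. -/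
theorem stmt_2 (a b : ℝ) (ha : 0 < a) (hab : a ≤ b) (g : ℝ → ℝ)
    (hconc : ConcaveOn ℝ (Set.Ico 0 b) g)
    (hbdd : ∃ M : ℝ, ∀ x ∈ Set.Ico (0 : ℝ) b, |g x| ≤ M)
    (hga : ∀ x ∈ Set.Ico (0 : ℝ) a, g x = x)
    (heq : 3 * a * ∫ x in (0 : ℝ)..b, (2 * x - g x) * g x =
      4 * (∫ x in (0 : ℝ)..b, g x) ^ 2) :
    ∫ x in (0 : ℝ)..b, g x = a * b / 2 :=
  have ⟨_, hM⟩ := hbdd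
  stmt_2_general ha hab hconc (memLp_of_concaveOn_of_bounded 2 (by simp) hconc hM) hga heq
end

section
/- Let c > 0 be a real number and let f : [0,c) → ℝ be a bounded concave function with f(0) = 0. Then ∫_0^c (3x − 2c)·f(x) dx ≤ 0. -/
open MeasureTheory intervalIntegral

/-!
Concavity and `0 ≤ f 0` make `x ↦ f x / x` antitone on `(0, c)`. The weight `(3x - 2c) x` changes
sign only at `a = 2c/3`, from negative to positive, so replacing `f x / x` by its value at `a` can
only increase the integral of `(3x - 2c) x * (f x / x)`. The weight itself integrates to `0`.
-/

lemma antitoneOn_div_self_of_concaveOn {𝕜 : Type*} [Field 𝕜] [LinearOrder 𝕜]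
    [IsStrictOrderedRing 𝕜] {s : Set 𝕜} {f : 𝕜 → 𝕜} (hf : ConcaveOn 𝕜 s f) (h0 : 0 ∈ s)
    (hf0 : 0 ≤ f 0) : AntitoneOn (fun x => f x / x) (s ∩ Set.Ioi 0) := by
  rintro x ⟨-, hx : 0 < x⟩ y ⟨hys, hy : 0 < y⟩ hxy
  have hxy_le_one : 0 ≤ 1 - x / y := sub_nonneg.2 ((div_le_one hy).2 hxy)
  have hchord : x / y * f y + (1 - x / y) * f 0 ≤ f x := by
    simpa [div_mul_cancel₀ x hy.ne'] using
      hf.2 hys h0 (div_pos hx hy).le hxy_le_one (add_sub_cancel _ _)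
  rw [le_div_iff₀ hx]
  calc f y / y * x = x / y * f y := by ring
    _ ≤ f x := (le_add_of_nonneg_right (mul_nonneg hxy_le_one hf0)).trans hchord

lemma integrableOn_of_concaveOn_of_bounded {E : Type*} [NormedAddCommGroup E] [NormedSpace ℝ E]
    [FiniteDimensional ℝ E] [MeasurableSpace E] [BorelSpace E] {μ : Measure E}
    [μ.IsAddHaarMeasure] {s : Set E} {f : E → ℝ} {M : ℝ} (hf : ConcaveOn ℝ s f)
    (hμs : μ s ≠ ⊤) (hM : ∀ x ∈ s, |f x| ≤ M) : IntegrableOn f s μ := by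
  have hinterior : interior s =ᵐ[μ] s :=
    interior_ae_eq_of_null_frontier (hf.1.addHaar_frontier μ)
  refine IntegrableOn.congr_set_ae ?_ hinterior.symm
  refine .of_bound ((measure_mono interior_subset).trans_lt hμs.lt_top)
    (hf.continuousOn_interior.aestronglyMeasurable isOpen_interior.measurableSet) M ?_
  exact ae_restrict_of_forall_mem isOpen_interior.measurableSet
    fun x hx => hM x (interior_subset hx)

lemma setIntegral_mul_le_of_antitoneOn {α : Type*} [LinearOrder α] [MeasurableSpace α]
    {μ : Measure α} {s : Set α} {u g : α → ℝ} {a : α} (hs : MeasurableSet s)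
    (hg : AntitoneOn g s) (ha : a ∈ s) (hu_nonpos : ∀ x ∈ s, x ≤ a → u x ≤ 0)
    (hu_nonneg : ∀ x ∈ s, a ≤ x → 0 ≤ u x) (hu : IntegrableOn u s μ)
    (hug : IntegrableOn (fun x => u x * g x) s μ) :
    ∫ x in s, u x * g x ∂μ ≤ (∫ x in s, u x ∂μ) * g a := by
  rw [← MeasureTheory.integral_mul_const]
  refine setIntegral_mono_on hug (hu.mul_const _) hs fun x hx => ?_
  rcases le_total x a with hxa | hax
  · exact mul_le_mul_of_nonpos_left (hg hx ha hxa) (hu_nonpos x hx hxa)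
  · exact mul_le_mul_of_nonneg_left (hg ha hx hax) (hu_nonneg x hx hax)

lemma integral_three_mul_sub_two_mul_mul_self (c : ℝ) :
    ∫ x in (0 : ℝ)..c, (3 * x - 2 * c) * x = 0 := by
  have hderiv (x : ℝ) : HasDerivAt (fun x => x ^ 3 - c * x ^ 2) ((3 * x - 2 * c) * x) x :=
    ((hasDerivAt_pow 3 x).sub ((hasDerivAt_pow 2 x).const_mul c)).congr_deriv
      (by norm_num; ring)
  rw [integral_eq_sub_of_hasDerivAt (fun x _ => hderiv x)
    (Continuous.intervalIntegrable (by fun_prop) _ _)]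
  ring

theorem stmt_3_general {c : ℝ} (hc : 0 < c) {f : ℝ → ℝ} (hconc : ConcaveOn ℝ (Set.Ico 0 c) f)
    (hf : IntervalIntegrable f volume 0 c) (hf0 : 0 ≤ f 0) :
    ∫ x in (0 : ℝ)..c, (3 * x - 2 * c) * f x ≤ 0 := by
  have hslope : AntitoneOn (fun x => f x / x) (Set.Ioo 0 c) :=
    (antitoneOn_div_self_of_concaveOn hconc (Set.left_mem_Ico.2 hc) hf0).mono
      fun x hx => ⟨Set.Ioo_subset_Ico_self hx, hx.1⟩
  have hfactor : Set.EqOn (fun x => (3 * x - 2 * c) * f x)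
      (fun x => (3 * x - 2 * c) * x * (f x / x)) (Set.Ioo 0 c) :=
    fun x hx => by field_simp [hx.1.ne']
  have hweight_int : IntegrableOn (fun x => (3 * x - 2 * c) * x) (Set.Ioo 0 c) :=
    (intervalIntegrable_iff_integrableOn_Ioo_of_le hc.le).1
      (Continuous.intervalIntegrable (by fun_prop) _ _)
  have hprod_int : IntegrableOn (fun x => (3 * x - 2 * c) * f x) (Set.Ioo 0 c) :=
    (intervalIntegrable_iff_integrableOn_Ioo_of_le hc.le).1 (hf.continuousOn_mul (by fun_prop))
  have hweight_zero := integral_three_mul_sub_two_mul_mul_self c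
  rw [integral_of_le hc.le, integral_Ioc_eq_integral_Ioo] at hweight_zero ⊢
  calc ∫ x in Set.Ioo 0 c, (3 * x - 2 * c) * f x
      = ∫ x in Set.Ioo 0 c, (3 * x - 2 * c) * x * (f x / x) :=
        setIntegral_congr_fun measurableSet_Ioo hfactor
    _ ≤ (∫ x in Set.Ioo 0 c, (3 * x - 2 * c) * x) * (f (2 * c / 3) / (2 * c / 3)) :=
        setIntegral_mul_le_of_antitoneOn measurableSet_Ioo hslope ⟨by linarith, by linarith⟩
          (fun x hx hxa => mul_nonpos_of_nonpos_of_nonneg (by linarith) hx.1.le)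
          (fun x hx hax => mul_nonneg (by linarith) hx.1.le)
          hweight_int (hprod_int.congr_fun hfactor measurableSet_Ioo)
    _ = 0 := by rw [hweight_zero, zero_mul]

/-- The key claim in the proof of Lemma 3.3: for `c > 0` and a bounded concave
function `f` on `[0, c)` with `f 0 = 0`, we have `∫_0^c (3x − 2c)·f x dx ≤ 0`. -/
theorem stmt_3 (c : ℝ) (hc : 0 < c) (f : ℝ → ℝ)
    (hconc : ConcaveOn ℝ (Set.Ico 0 c) f)
    (hbdd : ∃ M : ℝ, ∀ x ∈ Set.Ico (0 : ℝ) c, |f x| ≤ M)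
    (hf0 : f 0 = 0) :
    ∫ x in (0 : ℝ)..c, (3 * x - 2 * c) * f x ≤ 0 := by
  obtain ⟨M, hM⟩ := hbdd
  exact stmt_3_general hc hconc ((intervalIntegrable_iff_integrableOn_Ico_of_le hc.le).2
    (integrableOn_of_concaveOn_of_bounded hconc measure_Ico_lt_top.ne hM)) hf0.ge
end

section
/- Let c > 0 be a real number and let f : [0,c) → ℝ be a bounded concave function with f(0) = 0. Then the function F : [0,c) → ℝ defined by F(t) = ∫_0^t (3x − 2t)·f(x) dx is nonincreasing; that is, F(t) ≤ F(s) whenever 0 ≤ s ≤ t < c. -/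
open MeasureTheory intervalIntegral

/-!
The fundamental theorem of calculus gives `F'(t) = t f(t) - 2 ∫₀ᵗ f`. Pairing each `x` with its
reflection `t - x`, concavity yields `f 0 + f t ≤ f x + f (t - x)`, and integrating over `[0, t]`
gives `t (f 0 + f t) ≤ 2 ∫₀ᵗ f`. As `0 ≤ f 0`, this says `F' ≤ 0`. The same reflection shows that a
concave function on a compact interval is bounded, hence integrable, so that `F` is continuous up to
the endpoints even where `f` is not.
-/

section Concave

open Set

lemma smul_add_smul_add_swap {𝕜 E : Type*} [Semiring 𝕜] [AddCommMonoid E] [Module 𝕜 E]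
    {p q : 𝕜} (hpq : p + q = 1) (a b : E) : (p • a + q • b) + (q • a + p • b) = a + b := by
  rw [add_add_add_comm, ← add_smul, ← add_smul, add_comm q p, hpq, one_smul, one_smul]

lemma add_le_add_reflection_of_concaveOn {𝕜 E β : Type*} [Semiring 𝕜] [PartialOrder 𝕜]
    [AddCommGroup E] [Module 𝕜 E] [AddCommMonoid β] [PartialOrder β] [IsOrderedAddMonoid β]
    [Module 𝕜 β] {s : Set E} {f : E → β} (hf : ConcaveOn 𝕜 s f) {a b x : E}
    (ha : a ∈ s) (hb : b ∈ s) (hx : x ∈ segment 𝕜 a b) :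
    f a + f b ≤ f x + f (a + b - x) := by
  obtain ⟨p, q, hp, hq, hpq, rfl⟩ := hx
  have reflection_eq : a + b - (p • a + q • b) = q • a + p • b := by
    rw [← smul_add_smul_add_swap hpq a b, add_sub_cancel_left]
  calc f a + f b = (p • f a + q • f b) + (q • f a + p • f b) :=
        (smul_add_smul_add_swap hpq _ _).symm
    _ ≤ f (p • a + q • b) + f (q • a + p • b) :=
        add_le_add (hf.2 ha hb hp hq hpq) (hf.2 ha hb hq hp ((add_comm q p).trans hpq))
    _ = f (p • a + q • b) + f (a + b - (p • a + q • b)) := by rw [reflection_eq]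

variable {a b : ℝ} {f : ℝ → ℝ}

lemma exists_abs_le_of_concaveOn_Icc (hf : ConcaveOn ℝ (Icc a b) f) :
    ∃ M, ∀ x ∈ Icc a b, |f x| ≤ M := by
  set m := min (f a) (f b)
  have lower : ∀ x ∈ Icc a b, m ≤ f x := fun x hx =>
    have hab := hx.1.trans hx.2
    hf.min_le_of_mem_Icc (left_mem_Icc.2 hab) (right_mem_Icc.2 hab) hx
  have upper : ∀ x ∈ Icc a b, f x ≤ 2 * f ((a + b) / 2) - m := by
    intro x hx
    have hx' : a + b - x ∈ Icc a b := ⟨by linarith [hx.2], by linarith [hx.1]⟩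
    have midpoint_ge := hf.2 hx hx' one_half_pos.le one_half_pos.le (add_halves 1)
    have midpoint_eq : (1 / 2 : ℝ) • x + (1 / 2 : ℝ) • (a + b - x) = (a + b) / 2 := by
      simp only [smul_eq_mul]
      ring
    rw [midpoint_eq, smul_eq_mul, smul_eq_mul] at midpoint_ge
    linarith [lower _ hx']
  exact ⟨_, fun x hx => abs_le_max_abs_abs (lower x hx) (upper x hx)⟩

lemma integrableOn_Icc_of_concaveOn (μ : Measure ℝ) [IsFiniteMeasureOnCompacts μ]
    (hf : ConcaveOn ℝ (Icc a b) f) : IntegrableOn f (Icc a b) μ := by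
  obtain ⟨M, hM⟩ := exists_abs_le_of_concaveOn_Icc hf
  have hcont : ContinuousOn f (Ioo a b) := by
    simpa only [interior_Icc] using hf.continuousOn_interior
  have hinterior : IntegrableOn f (Ioo a b) μ := by
    refine IntegrableOn.of_bound measure_Ioo_lt_top
      (hcont.aestronglyMeasurable measurableSet_Ioo) M ?_
    filter_upwards [ae_restrict_mem measurableSet_Ioo] with x hx
    exact hM x (Ioo_subset_Icc_self hx)
  have hendpoints : IntegrableOn f {a, b} μ :=
    (integrableOn_singleton (hx := isCompact_singleton.measure_lt_top)).union
      (integrableOn_singleton (hx := isCompact_singleton.measure_lt_top))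
  exact (hinterior.union hendpoints).mono_set (by grind)

lemma sub_mul_add_le_two_mul_integral_of_concaveOn (hab : a ≤ b) (hf : ConcaveOn ℝ (Icc a b) f) :
    (b - a) * (f a + f b) ≤ 2 * ∫ x in a..b, f x := by
  have hint : IntervalIntegrable f volume a b :=
    (intervalIntegrable_iff_integrableOn_Icc_of_le hab).2 (integrableOn_Icc_of_concaveOn volume hf)
  have hint' : IntervalIntegrable (fun x => f (a + b - x)) volume a b := by
    simpa using (hint.comp_sub_left (a + b)).symm
  calc (b - a) * (f a + f b) = ∫ _ in a..b, (f a + f b) := by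
        rw [intervalIntegral.integral_const, smul_eq_mul]
    _ ≤ ∫ x in a..b, (f x + f (a + b - x)) :=
        integral_mono_on hab intervalIntegrable_const (hint.add hint') fun x hx =>
          add_le_add_reflection_of_concaveOn hf (left_mem_Icc.2 hab) (right_mem_Icc.2 hab)
            (Icc_subset_segment hx)
    _ = 2 * ∫ x in a..b, f x := by
        rw [intervalIntegral.integral_add hint hint', integral_comp_sub_left,
          add_sub_cancel_right, add_sub_cancel_left, two_mul]

end Concave

section LinearKernel

open Set

lemma hasDerivAt_integral_of_mem_Ioo {E : Type*} [NormedAddCommGroup E] [NormedSpace ℝ E]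
    [CompleteSpace E] {f : ℝ → E} {a b t : ℝ} (hf : IntervalIntegrable f volume a b)
    (ht : t ∈ Ioo a b) (hft : ContinuousAt f t) :
    HasDerivAt (fun u => ∫ x in a..u, f x) (f t) t := by
  have hat : IntervalIntegrable f volume a t :=
    hf.mono_set (uIcc_subset_uIcc_left (Icc_subset_uIcc (Ioo_subset_Icc_self ht)))
  exact integral_hasDerivAt_right hat
    ⟨Ioc a b, Ioc_mem_nhds ht.1 ht.2, hf.aestronglyMeasurable⟩ hft

variable {f : ℝ → ℝ} {a b : ℝ} (p q : ℝ)

lemma integral_linear_sub_const_mul (hf : IntervalIntegrable f volume a b) :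
    ∫ x in a..b, (p * x - q) * f x = p * (∫ x in a..b, x * f x) - q * ∫ x in a..b, f x := by
  have hxf : IntervalIntegrable (fun x => x * f x) volume a b := hf.continuousOn_mul continuousOn_id
  simp only [sub_mul, mul_assoc]
  rw [intervalIntegral.integral_sub (hxf.const_mul p) (hf.const_mul q),
    intervalIntegral.integral_const_mul, intervalIntegral.integral_const_mul]

lemma eqOn_integral_linear_mul (hf : IntervalIntegrable f volume a b) :
    EqOn (fun t => ∫ x in a..t, (p * x - q * t) * f x)
      (fun t => p * (∫ x in a..t, x * f x) - q * t * ∫ x in a..t, f x) (uIcc a b) :=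
  fun t ht => integral_linear_sub_const_mul p (q * t) (hf.mono_set (uIcc_subset_uIcc_left ht))

lemma continuousOn_integral_linear_mul (hf : IntervalIntegrable f volume a b) :
    ContinuousOn (fun t => ∫ x in a..t, (p * x - q * t) * f x) (uIcc a b) := by
  have hxf : IntervalIntegrable (fun x => x * f x) volume a b := hf.continuousOn_mul continuousOn_id
  have primitive_xf := continuousOn_primitive_interval' hxf left_mem_uIcc
  have primitive_f := continuousOn_primitive_interval' hf left_mem_uIcc
  refine ContinuousOn.congr ?_ (eqOn_integral_linear_mul p q hf)
  fun_prop

lemma hasDerivAt_integral_linear_mul {t : ℝ} (hf : IntervalIntegrable f volume a b)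
    (ht : t ∈ Ioo a b) (hft : ContinuousAt f t) :
    HasDerivAt (fun u => ∫ x in a..u, (p * x - q * u) * f x)
      ((p - q) * t * f t - q * ∫ x in a..t, f x) t := by
  have hxf : IntervalIntegrable (fun x => x * f x) volume a b := hf.continuousOn_mul continuousOn_id
  have deriv_xf := hasDerivAt_integral_of_mem_Ioo hxf ht (continuousAt_id.mul hft)
  have deriv_f := hasDerivAt_integral_of_mem_Ioo hf ht hft
  have deriv_split := (deriv_xf.const_mul p).sub (((hasDerivAt_id t).const_mul q).mul deriv_f)
  have eventually_split := (eqOn_integral_linear_mul p q hf).eventuallyEq_of_mem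
    (Filter.mem_of_superset (Icc_mem_nhds ht.1 ht.2) Icc_subset_uIcc)
  refine (deriv_split.congr_of_eventuallyEq eventually_split).congr_deriv ?_
  simp only [id]
  ring

end LinearKernel

theorem stmt_5_general {b : ℝ} {f : ℝ → ℝ} (hf : ConcaveOn ℝ (Set.Icc 0 b) f) (hf0 : 0 ≤ f 0) :
    AntitoneOn (fun t => ∫ x in (0 : ℝ)..t, (3 * x - 2 * t) * f x) (Set.Icc 0 b) := by
  rcases lt_or_ge b 0 with hb | hb
  · exact (Set.subsingleton_Icc_of_ge hb.le).antitoneOn _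
  have hint : IntervalIntegrable f volume 0 b :=
    (intervalIntegrable_iff_integrableOn_Icc_of_le hb).2 (integrableOn_Icc_of_concaveOn volume hf)
  refine antitoneOn_of_hasDerivWithinAt_nonpos (convex_Icc 0 b)
    (Set.uIcc_of_le hb ▸ continuousOn_integral_linear_mul 3 2 hint)
    (f' := fun t => (3 - 2) * t * f t - 2 * ∫ x in (0 : ℝ)..t, f x)
    (fun t ht => ?deriv) (fun t ht => ?nonpos)
  case deriv =>
    have hft : ContinuousAt f t :=
      hf.continuousOn_interior.continuousAt (isOpen_interior.mem_nhds ht)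
    rw [interior_Icc] at ht
    exact (hasDerivAt_integral_linear_mul 3 2 hint ht hft).hasDerivWithinAt
  case nonpos =>
    obtain ⟨ht0, htb⟩ := interior_subset ht
    have trapezoid := sub_mul_add_le_two_mul_integral_of_concaveOn ht0
      (hf.subset (Set.Icc_subset_Icc_right htb) (convex_Icc 0 t))
    linarith [mul_nonneg ht0 hf0]

/-- Monotonicity of `F t = ∫_0^t (3x − 2t)·f x dx` in the proof of Lemma 3.3:
for `c > 0` and a bounded concave function `f` on `[0, c)` with `f 0 = 0`,
the function `F` is nonincreasing on `[0, c)`. -/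
theorem stmt_5 (c : ℝ) (hc : 0 < c) (f : ℝ → ℝ)
    (hconc : ConcaveOn ℝ (Set.Ico 0 c) f)
    (hbdd : ∃ M : ℝ, ∀ x ∈ Set.Ico (0 : ℝ) c, |f x| ≤ M)
    (hf0 : f 0 = 0)
    (F : ℝ → ℝ) (hF : ∀ t, F t = ∫ x in (0 : ℝ)..t, (3 * x - 2 * t) * f x) :
    ∀ s t : ℝ, 0 ≤ s → s ≤ t → t < c → F t ≤ F s := by
  intro s t hs hst htc
  simpa only [hF] using stmt_5_general (hconc.subset (Set.Icc_subset_Ico_right htc)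
    (convex_Icc 0 t)) hf0.ge ⟨hs, hst⟩ ⟨hs.trans hst, le_rfl⟩ hst
end

section
/- Let a > 0 be a real number, let n ≥ 1 be an integer, and let g : [0,a) → ℝ be a nonnegative bounded concave function with g(0) > 0. Then g(0)^{n−1}·∫_0^a x·g(x)^{n−1} dx ≤ (n/(n+1))·(∫_0^a g(x)^{n−1} dx)². -/
open MeasureTheory intervalIntegral

/-!
Write `p = n - 1` and compare `g` with the affine function `h x = g 0 * (1 - x / b)`, where `b` is
chosen so that `∫₀ᵇ h ^ p = ∫₀ᵃ g ^ p`. Concavity puts `g` above its chord to `(a, 0)`, hence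
`a ≤ b`. Since `g - h` is concave on `[0, a)` and vanishes at `0`, it changes sign at most once,
from `+` to `-`. Extending `g` by zero to `[a, b)`, passing from `g ^ p` to `h ^ p` therefore moves
mass to the right, so the first moment grows: `∫₀ᵃ x * g ^ p ≤ ∫₀ᵇ x * h ^ p`. For `h` the claimed
inequality is an equality.
-/

section Concave

variable {l u : ℝ} {g h : ℝ → ℝ}

lemma exists_crossing_of_concaveOn_convexOn (hlu : l < u) (hg : ConcaveOn ℝ (Set.Ico l u) g)
    (hh : ConvexOn ℝ (Set.Ico l u) h) (hl : h l ≤ g l) :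
    ∃ c ≤ u, (∀ x ∈ Set.Ico l u, x < c → h x ≤ g x) ∧ ∀ x ∈ Set.Ico l u, c < x → g x ≤ h x := by
  set S : Set ℝ := {x ∈ Set.Ico l u | 0 ≤ (g - h) x}
  have hS : S.OrdConnected := ((hg.sub hh).convex_ge 0).ordConnected
  have hlS : l ∈ S := ⟨⟨le_rfl, hlu⟩, sub_nonneg.2 hl⟩
  refine ⟨sSup S, csSup_le ⟨l, hlS⟩ fun x hx => hx.1.2.le, fun x hx hxc => ?_, fun x hx hcx => ?_⟩
  · obtain ⟨y, hyS, hxy⟩ := exists_lt_of_lt_csSup ⟨l, hlS⟩ hxc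
    exact sub_nonneg.1 (hS.out hlS hyS ⟨hx.1, hxy.le⟩).2
  · by_contra! hlt
    exact hcx.not_ge (le_csSup ⟨u, fun y hy => hy.1.2.le⟩ ⟨hx, sub_nonneg.2 hlt.le⟩)

lemma le_three_mul_midpoint_of_concaveOn (hg : ConcaveOn ℝ (Set.Ico l u) g)
    (hnonneg : ∀ x ∈ Set.Ico l u, 0 ≤ g x) {x : ℝ} (hx : x ∈ Set.Ico l u) :
    g x ≤ 3 * g ((l + u) / 2) := by
  -- The midpoint is `x / 3 + 2 * y / 3` with `y` again in the interval.
  obtain ⟨y, hy⟩ : ∃ y, y = (3 * ((l + u) / 2) - x) / 2 := ⟨_, rfl⟩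
  have hyI : y ∈ Set.Ico l u := ⟨by linarith [hx.1, hx.2], by linarith [hx.1, hx.2]⟩
  have hconc : 1 / 3 * g x + 2 / 3 * g y ≤ g (1 / 3 * x + 2 / 3 * y) :=
    hg.2 hx hyI (by norm_num) (by norm_num) (by norm_num)
  have hmid : 1 / 3 * x + 2 / 3 * y = (l + u) / 2 := by rw [hy]; ring
  rw [hmid] at hconc
  linarith [hnonneg y hyI]

lemma intervalIntegrable_rpow_of_concaveOn {p : ℝ} (hp : 0 ≤ p) (hlu : l ≤ u)
    (hg : ConcaveOn ℝ (Set.Ico l u) g) (hnonneg : ∀ x ∈ Set.Ico l u, 0 ≤ g x) :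
    IntervalIntegrable (fun x => g x ^ p) volume l u := by
  rw [intervalIntegrable_iff_integrableOn_Ioo_of_le hlu]
  have hcont : ContinuousOn g (Set.Ioo l u) :=
    (hg.subset Set.Ioo_subset_Ico_self (convex_Ioo l u)).continuousOn isOpen_Ioo
  refine IntegrableOn.of_bound measure_Ioo_lt_top
    ((hcont.rpow_const fun _ _ => .inr hp).aestronglyMeasurable measurableSet_Ioo)
    ((3 * g ((l + u) / 2)) ^ p) (ae_restrict_of_forall_mem measurableSet_Ioo fun x hx => ?_)
  have hxI := Set.Ioo_subset_Ico_self hx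
  rw [Real.norm_of_nonneg (Real.rpow_nonneg (hnonneg x hxI) p)]
  exact Real.rpow_le_rpow (hnonneg x hxI) (le_three_mul_midpoint_of_concaveOn hg hnonneg hxI) hp

lemma mul_one_sub_div_le_of_concaveOn {a x : ℝ} (hg : ConcaveOn ℝ (Set.Ico 0 a) g)
    (hnonneg : ∀ y ∈ Set.Ico 0 a, 0 ≤ g y) (hx : x ∈ Set.Ioo 0 a) :
    g 0 * (1 - x / a) ≤ g x := by
  have ha : 0 < a := hx.1.trans hx.2
  have hchord : ∀ y ∈ Set.Ioo x a, g 0 * (1 - x / y) ≤ g x := fun y hy => by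
    have hy0 : 0 < y := hx.1.trans hy.1
    have hyI : y ∈ Set.Ico 0 a := ⟨hy0.le, hy.2⟩
    have hxy : 0 ≤ x / y := div_nonneg hx.1.le hy0.le
    have hconc := hg.2 ⟨le_rfl, ha⟩ hyI (sub_nonneg.2 ((div_le_one hy0).2 hy.1.le)) hxy (by ring)
    simp only [smul_eq_mul, mul_zero, zero_add, div_mul_cancel₀ x hy0.ne'] at hconc
    linarith [mul_nonneg hxy (hnonneg y hyI)]
  -- `g` is unconstrained at `a`, so the chord to `(a, 0)` is a limit of chords to `(y, 0)`.
  have hcont : ContinuousAt (fun y => g 0 * (1 - x / y)) a := by fun_prop (disch := exact ha.ne')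
  exact le_of_tendsto (hcont.tendsto.mono_left nhdsWithin_le_nhds)
    (Filter.eventually_of_mem (Ioo_mem_nhdsLT hx.2) hchord)

end Concave

section Affine

variable {p k b : ℝ}

lemma mul_one_sub_div_nonneg {x : ℝ} (hk : 0 ≤ k) (hb : 0 ≤ b) (hxb : x ≤ b) :
    0 ≤ k * (1 - x / b) :=
  mul_nonneg hk (sub_nonneg.2 (div_le_one_of_le₀ hxb hb))

lemma convexOn_mul_one_sub_div (k b : ℝ) {s : Set ℝ} (hs : Convex ℝ s) :
    ConvexOn ℝ s fun x => k * (1 - x / b) := by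
  refine ⟨hs, fun x _ y _ t₁ t₂ _ _ ht => le_of_eq ?_⟩
  simp only [smul_eq_mul]
  linear_combination -k * ht

lemma integral_mul_one_sub_div_rpow (hp : -1 < p) (hk : 0 ≤ k) (hb : b ≠ 0) :
    ∫ x in (0 : ℝ)..b, (k * (1 - x / b)) ^ p = k ^ p * b / (p + 1) := by
  have hp1 : p + 1 ≠ 0 := by linarith
  calc ∫ x in (0 : ℝ)..b, (k * (1 - x / b)) ^ p
      = b * ∫ t in (0 : ℝ)..1, (k * t) ^ p := by
        simp [integral_comp_sub_div (fun t => (k * t) ^ p) hb, hb]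
    _ = b * ∫ t in (0 : ℝ)..1, k ^ p * t ^ p := by
        congr 1
        refine integral_congr fun t ht => Real.mul_rpow hk ?_
        rw [Set.uIcc_of_le zero_le_one] at ht
        exact ht.1
    _ = k ^ p * b / (p + 1) := by
        rw [intervalIntegral.integral_const_mul, integral_rpow (.inl hp), Real.one_rpow,
          Real.zero_rpow hp1]
        ring

lemma integral_id_mul_mul_one_sub_div_rpow (hp : -1 < p) (hk : 0 ≤ k) (hb : b ≠ 0) :
    ∫ x in (0 : ℝ)..b, x * (k * (1 - x / b)) ^ p = k ^ p * b ^ 2 / ((p + 1) * (p + 2)) := by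
  have hp1 : p + 1 ≠ 0 := by linarith
  have hp2 : p + 2 ≠ 0 := by linarith
  calc ∫ x in (0 : ℝ)..b, x * (k * (1 - x / b)) ^ p
      = ∫ x in (0 : ℝ)..b, b * (1 - (1 - x / b)) * (k * (1 - x / b)) ^ p := by
        simp only [sub_sub_cancel, mul_div_cancel₀ _ hb]
    _ = b * ∫ t in (0 : ℝ)..1, b * (1 - t) * (k * t) ^ p := by
        rw [integral_comp_sub_div (fun t => b * (1 - t) * (k * t) ^ p) hb]
        simp [hb]
    _ = b * ∫ t in (0 : ℝ)..1, b * k ^ p * (t ^ p - t ^ (p + 1)) := by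
        congr 1
        refine integral_congr fun t ht => ?_
        rw [Set.uIcc_of_le zero_le_one] at ht
        simp only [Real.mul_rpow hk ht.1, Real.rpow_add_one' ht.1 hp1]
        ring
    _ = k ^ p * b ^ 2 / ((p + 1) * (p + 2)) := by
        have hp' : -1 < p + 1 := by linarith
        rw [intervalIntegral.integral_const_mul,
          intervalIntegral.integral_sub (intervalIntegrable_rpow' hp)
            (intervalIntegrable_rpow' hp'), integral_rpow (.inl hp), integral_rpow (.inl hp'),
          add_assoc p 1 1, one_add_one_eq_two, Real.one_rpow, Real.one_rpow, Real.zero_rpow hp1,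
          Real.zero_rpow hp2]
        field_simp
        ring

end Affine

lemma integral_sub_const_mul_eq {f : ℝ → ℝ} {l u : ℝ} (hf : IntervalIntegrable f volume l u)
    (c : ℝ) : ∫ x in l..u, (x - c) * f x = (∫ x in l..u, x * f x) - c * ∫ x in l..u, f x := by
  have hxf : IntervalIntegrable (fun x => x * f x) volume l u :=
    hf.continuousOn_mul continuousOn_id
  simp_rw [sub_mul]
  rw [intervalIntegral.integral_sub hxf (hf.const_mul c), intervalIntegral.integral_const_mul]

lemma integral_id_mul_le_of_crossing {f h : ℝ → ℝ} {l u v c : ℝ} (hlu : l ≤ u) (huv : u ≤ v)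
    (hcu : c ≤ u) (hf : IntervalIntegrable f volume l u) (hh : IntervalIntegrable h volume l v)
    (hmass : ∫ x in l..u, f x = ∫ x in l..v, h x)
    (hlt : ∀ x ∈ Set.Ioo l u, x < c → h x ≤ f x) (hgt : ∀ x ∈ Set.Ioo l u, c < x → f x ≤ h x)
    (hnonneg : ∀ x ∈ Set.Icc u v, 0 ≤ h x) :
    ∫ x in l..u, x * f x ≤ ∫ x in l..v, x * h x := by
  have hu : u ∈ Set.uIcc l v := Set.mem_uIcc_of_le hlu huv
  have hh_lu : IntervalIntegrable (fun x => (x - c) * h x) volume l u :=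
    (hh.mono_set (Set.uIcc_subset_uIcc_left hu)).continuousOn_mul (by fun_prop)
  have hh_uv : IntervalIntegrable (fun x => (x - c) * h x) volume u v :=
    (hh.mono_set (Set.uIcc_subset_uIcc_right hu)).continuousOn_mul (by fun_prop)
  have hleft : ∫ x in l..u, (x - c) * f x ≤ ∫ x in l..u, (x - c) * h x := by
    refine integral_mono_on_of_le_Ioo hlu (hf.continuousOn_mul (by fun_prop)) hh_lu fun x hx => ?_
    rcases lt_trichotomy x c with hxc | rfl | hcx
    · exact mul_le_mul_of_nonpos_left (hlt x hx hxc) (sub_nonpos.2 hxc.le)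
    · simp
    · exact mul_le_mul_of_nonneg_left (hgt x hx hcx) (sub_nonneg.2 hcx.le)
  have hright : 0 ≤ ∫ x in u..v, (x - c) * h x :=
    integral_nonneg huv fun x hx => mul_nonneg (sub_nonneg.2 (hcu.trans hx.1)) (hnonneg x hx)
  have hmoment : ∫ x in l..u, (x - c) * f x ≤ ∫ x in l..v, (x - c) * h x := by
    linarith [integral_add_adjacent_intervals hh_lu hh_uv]
  rw [integral_sub_const_mul_eq hf, integral_sub_const_mul_eq hh, hmass] at hmoment
  linarith

section Comparison

variable {a p : ℝ} {g : ℝ → ℝ}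

lemma exists_integral_affine_rpow_eq (ha : 0 < a) (hp : 0 ≤ p) (hg : ConcaveOn ℝ (Set.Ico 0 a) g)
    (hnonneg : ∀ x ∈ Set.Ico 0 a, 0 ≤ g x) (hg0 : 0 < g 0) :
    ∃ b ≥ a, ∫ x in (0 : ℝ)..a, g x ^ p = ∫ x in (0 : ℝ)..b, (g 0 * (1 - x / b)) ^ p := by
  have hG : 0 < g 0 ^ p := Real.rpow_pos_of_pos hg0 p
  have hchord : g 0 ^ p * a / (p + 1) ≤ ∫ x in (0 : ℝ)..a, g x ^ p := by
    rw [← integral_mul_one_sub_div_rpow (by linarith) hg0.le ha.ne']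
    refine integral_mono_on_of_le_Ioo ha.le ?_
      (intervalIntegrable_rpow_of_concaveOn hp ha.le hg hnonneg) fun x hx => ?_
    · exact Continuous.intervalIntegrable (by fun_prop (disch := exact hp)) _ _
    · exact Real.rpow_le_rpow (mul_one_sub_div_nonneg hg0.le ha.le hx.2.le)
        (mul_one_sub_div_le_of_concaveOn hg hnonneg hx) hp
  obtain ⟨b, hb⟩ : ∃ b, b = (p + 1) * (∫ x in (0 : ℝ)..a, g x ^ p) / g 0 ^ p := ⟨_, rfl⟩
  have hab : a ≤ b := by
    rw [div_le_iff₀ (by linarith)] at hchord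
    rw [hb, le_div_iff₀ hG]
    linarith
  refine ⟨b, hab, ?_⟩
  rw [integral_mul_one_sub_div_rpow (by linarith) hg0.le (ha.trans_le hab).ne', hb]
  field_simp

lemma integral_id_mul_rpow_le_integral_affine {b : ℝ} (ha : 0 < a) (hp : 0 ≤ p)
    (hg : ConcaveOn ℝ (Set.Ico 0 a) g) (hnonneg : ∀ x ∈ Set.Ico 0 a, 0 ≤ g x) (hab : a ≤ b)
    (hmass : ∫ x in (0 : ℝ)..a, g x ^ p = ∫ x in (0 : ℝ)..b, (g 0 * (1 - x / b)) ^ p) :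
    ∫ x in (0 : ℝ)..a, x * g x ^ p ≤ ∫ x in (0 : ℝ)..b, x * (g 0 * (1 - x / b)) ^ p := by
  have haff {x : ℝ} (hx : x ≤ b) : 0 ≤ g 0 * (1 - x / b) :=
    mul_one_sub_div_nonneg (hnonneg 0 ⟨le_rfl, ha⟩) (ha.le.trans hab) hx
  obtain ⟨c, hca, hlt, hgt⟩ := exists_crossing_of_concaveOn_convexOn ha hg
    (convexOn_mul_one_sub_div (g 0) b (convex_Ico 0 a)) (by simp)
  refine integral_id_mul_le_of_crossing ha.le hab hca
    (intervalIntegrable_rpow_of_concaveOn hp ha.le hg hnonneg)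
    (Continuous.intervalIntegrable (by fun_prop (disch := exact hp)) _ _) hmass
    (fun x hx hxc => ?_) (fun x hx hcx => ?_) fun x hx => Real.rpow_nonneg (haff hx.2) p
  · exact Real.rpow_le_rpow (haff (hx.2.le.trans hab)) (hlt x ⟨hx.1.le, hx.2⟩ hxc) hp
  · exact Real.rpow_le_rpow (hnonneg x ⟨hx.1.le, hx.2⟩) (hgt x ⟨hx.1.le, hx.2⟩ hcx) hp

theorem stmt_6_general (ha : 0 < a) (hp : 0 ≤ p) (hg : ConcaveOn ℝ (Set.Ico 0 a) g)
    (hnonneg : ∀ x ∈ Set.Ico 0 a, 0 ≤ g x) (hg0 : 0 < g 0) :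
    g 0 ^ p * ∫ x in (0 : ℝ)..a, x * g x ^ p ≤
      (p + 1) / (p + 2) * (∫ x in (0 : ℝ)..a, g x ^ p) ^ 2 := by
  obtain ⟨b, hab, hmass⟩ := exists_integral_affine_rpow_eq ha hp hg hnonneg hg0
  have hb : b ≠ 0 := (ha.trans_le hab).ne'
  have hp' : -1 < p := by linarith
  calc g 0 ^ p * ∫ x in (0 : ℝ)..a, x * g x ^ p
      ≤ g 0 ^ p * ∫ x in (0 : ℝ)..b, x * (g 0 * (1 - x / b)) ^ p := by
        gcongr
        exact integral_id_mul_rpow_le_integral_affine ha hp hg hnonneg hab hmass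
    _ = (p + 1) / (p + 2) * (g 0 ^ p * b / (p + 1)) ^ 2 := by
        rw [integral_id_mul_mul_one_sub_div_rpow hp' hg0.le hb]
        field_simp
    _ = (p + 1) / (p + 2) * (∫ x in (0 : ℝ)..a, g x ^ p) ^ 2 := by
        rw [hmass, integral_mul_one_sub_div_rpow hp' hg0.le hb]

end Comparison

/-- Lemma 3.4 (inequality part): for `a > 0`, an integer `n ≥ 1`, and a
nonnegative bounded concave function `g` on `[0, a)` with `g 0 > 0`,
`g(0)^{n−1}·∫_0^a x·g(x)^{n−1} dx ≤ (n/(n+1))·(∫_0^a g(x)^{n−1} dx)²`. -/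
theorem stmt_6 (a : ℝ) (ha : 0 < a) (n : ℕ) (hn : 1 ≤ n) (g : ℝ → ℝ)
    (hconc : ConcaveOn ℝ (Set.Ico 0 a) g)
    (hnonneg : ∀ x ∈ Set.Ico (0 : ℝ) a, 0 ≤ g x)
    (hbdd : ∃ M : ℝ, ∀ x ∈ Set.Ico (0 : ℝ) a, |g x| ≤ M)
    (hg0 : 0 < g 0) :
    g 0 ^ (n - 1) * ∫ x in (0 : ℝ)..a, x * g x ^ (n - 1) ≤
      ((n : ℝ) / (n + 1)) * (∫ x in (0 : ℝ)..a, g x ^ (n - 1)) ^ 2 := by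
  obtain ⟨m, rfl⟩ := Nat.exists_eq_add_of_le' hn
  simpa [add_assoc, one_add_one_eq_two] using
    stmt_6_general ha m.cast_nonneg hconc hnonneg hg0
end

section
/- Let a > 0 be a real number, let n ≥ 2 be an integer, and let g : [0,a] → ℝ be a nonnegative concave function with g(0) = 1. Let b ≥ a be a real number such that ∫_0^a g(x)^{n−1} dx = ∫_0^b (1 − x/b)^{n−1} dx. Then ∫_0^a x·g(x)^{n−1} dx ≤ ∫_0^b x·(1 − x/b)^{n−1} dx. -/
open MeasureTheory intervalIntegral

/-!
The difference of a concave function `g` and a convex function `l` with `l ≤ g` at the left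
endpoint changes sign at most once, from `+` to `-`, say at `c`; so does `φ ∘ g - φ ∘ l` for a
monotone `φ`. Beyond the domain of `g`, where only `φ ∘ l ≥ 0` contributes, the sign remains
`-`. If the weight `w` is monotone, `w - w c` changes sign at `c` the other way, so `w - w c`
has a smaller integral against `φ ∘ g` than against `φ ∘ l`. When `φ ∘ g` and `φ ∘ l` have the
same total integral, the multiples of `w c` cancel. The cone profile `1 - x / b` is an affine
`l`, and `φ` is then the power `n - 1`.
-/

open Set

section Crossing

lemma exists_crossing_of_quasiconcaveOn {β : Type*} [LinearOrder β] {f : ℝ → β} {a b : ℝ} {r : β}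
    (hab : a ≤ b) (hf : QuasiconcaveOn ℝ (Icc a b) f) (hr : r ≤ f a) :
    ∃ c ∈ Icc a b, (∀ x ∈ Ico a c, r ≤ f x) ∧ ∀ x ∈ Ioc c b, f x < r := by
  let S : Set ℝ := {x ∈ Icc a b | r ≤ f x}
  have ha : a ∈ S := ⟨left_mem_Icc.2 hab, hr⟩
  have hS : BddAbove S := ⟨b, fun x hx => hx.1.2⟩
  have hac : a ≤ sSup S := le_csSup hS ha
  refine ⟨sSup S, ⟨hac, csSup_le ⟨a, ha⟩ fun x hx => hx.1.2⟩, fun x hx => ?_, fun x hx => ?_⟩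
  · obtain ⟨y, hy, hxy⟩ := exists_lt_of_lt_csSup ⟨a, ha⟩ hx.2
    exact ((hf r).ordConnected.out ha hy ⟨hx.1, hxy.le⟩).2
  · by_contra! h
    exact hx.1.not_ge (le_csSup hS ⟨⟨hac.trans hx.1.le, hx.2⟩, h⟩)

lemma integral_le_integral_of_le_of_nonneg {μ : Measure ℝ} {f h : ℝ → ℝ} {x₀ a b : ℝ}
    (hxa : x₀ ≤ a) (hab : a ≤ b)
    (hf : IntervalIntegrable f μ x₀ a) (hh : IntervalIntegrable h μ x₀ b)
    (hfh : ∀ x ∈ Icc x₀ a, f x ≤ h x) (hh0 : ∀ x ∈ Icc a b, 0 ≤ h x) :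
    ∫ x in x₀..a, f x ∂μ ≤ ∫ x in x₀..b, h x ∂μ := by
  have hh_left : IntervalIntegrable h μ x₀ a :=
    hh.mono_set (by simpa [uIcc_of_le, hxa, hxa.trans hab] using Icc_subset_Icc_right hab)
  rw [← integral_add_adjacent_intervals hh_left (hh_left.symm.trans hh)]
  exact le_add_of_le_of_nonneg (integral_mono_on hxa hf hh_left hfh) (integral_nonneg hab hh0)

lemma integral_mul_le_integral_mul_of_crossing {μ : Measure ℝ} {f h w : ℝ → ℝ} {x₀ a b c : ℝ}
    (hab : a ≤ b) (hc : c ∈ Icc x₀ a)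
    (hf : IntervalIntegrable f μ x₀ a) (hh : IntervalIntegrable h μ x₀ b)
    (hw : MonotoneOn w (Icc x₀ b)) (hwc : ContinuousOn w (Icc x₀ b))
    (hbefore : ∀ x ∈ Ico x₀ c, h x ≤ f x) (hafter : ∀ x ∈ Ioc c a, f x ≤ h x)
    (htail : ∀ x ∈ Icc a b, 0 ≤ h x)
    (heq : ∫ x in x₀..a, f x ∂μ = ∫ x in x₀..b, h x ∂μ) :
    ∫ x in x₀..a, w x * f x ∂μ ≤ ∫ x in x₀..b, w x * h x ∂μ := by
  have hxa : x₀ ≤ a := hc.1.trans hc.2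
  have hcb : c ∈ Icc x₀ b := ⟨hc.1, hc.2.trans hab⟩
  have hwb : ContinuousOn w (uIcc x₀ b) := by rwa [uIcc_of_le (hxa.trans hab)]
  have hwa : ContinuousOn w (uIcc x₀ a) := by
    simpa only [uIcc_of_le hxa] using hwc.mono (Icc_subset_Icc_right hab)
  have hcompare : ∀ x ∈ Icc x₀ a, (w x - w c) * f x ≤ (w x - w c) * h x := by
    intro x hx
    have hxb : x ∈ Icc x₀ b := ⟨hx.1, hx.2.trans hab⟩
    rcases lt_trichotomy x c with hxc | rfl | hcx
    · exact mul_le_mul_of_nonpos_left (hbefore x ⟨hx.1, hxc⟩)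
        (sub_nonpos.2 (hw hxb hcb hxc.le))
    · simp
    · exact mul_le_mul_of_nonneg_left (hafter x ⟨hcx, hx.2⟩) (sub_nonneg.2 (hw hcb hxb hcx.le))
  have htail_mul : ∀ x ∈ Icc a b, 0 ≤ (w x - w c) * h x := fun x hx =>
    mul_nonneg (sub_nonneg.2 (hw hcb ⟨hxa.trans hx.1, hx.2⟩ (hc.2.trans hx.1))) (htail x hx)
  have hshifted : ∫ x in x₀..a, (w x - w c) * f x ∂μ ≤ ∫ x in x₀..b, (w x - w c) * h x ∂μ :=
    integral_le_integral_of_le_of_nonneg hxa hab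
      (hf.continuousOn_mul (hwa.sub continuousOn_const))
      (hh.continuousOn_mul (hwb.sub continuousOn_const)) hcompare htail_mul
  simp only [sub_mul] at hshifted
  rwa [integral_sub (hf.continuousOn_mul hwa) (hf.const_mul _),
    integral_sub (hh.continuousOn_mul hwb) (hh.const_mul _), intervalIntegral.integral_const_mul,
    intervalIntegral.integral_const_mul, heq, sub_le_sub_iff_right] at hshifted

end Crossing

section Integrability

lemma aemeasurable_restrict_of_convexOn {E : Type*} [NormedAddCommGroup E] [NormedSpace ℝ E]
    [FiniteDimensional ℝ E] [MeasurableSpace E] [BorelSpace E] {μ : Measure E}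
    [μ.IsAddHaarMeasure] {s : Set E} {f : E → ℝ} (hf : ConvexOn ℝ s f) :
    AEMeasurable f (μ.restrict s) := by
  rw [← Measure.restrict_congr_set (interior_ae_eq_of_null_frontier (hf.1.addHaar_frontier μ))]
  exact hf.continuousOn_interior.aemeasurable isOpen_interior.measurableSet

lemma integrable_comp_of_monotoneOn {α : Type*} [MeasurableSpace α] {μ : Measure α}
    [IsFiniteMeasure μ] {f : α → ℝ} {φ : ℝ → ℝ} {m M : ℝ} (hφ : MonotoneOn φ (Icc m M))
    (hf : AEMeasurable f μ) (hfmM : ∀ᵐ x ∂μ, f x ∈ Icc m M) :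
    Integrable (fun x => φ (f x)) μ := by
  have hbounds : ∀ t ∈ Icc m M, φ t ∈ Icc (φ m) (φ M) := fun t ht =>
    have hmM : m ≤ M := ht.1.trans ht.2
    ⟨hφ (left_mem_Icc.2 hmM) ht ht.1, hφ ht (right_mem_Icc.2 hmM) ht.2⟩
  obtain ⟨ψ, hψ, hφψ⟩ := hφ.exists_monotone_extension
    ⟨φ m, forall_mem_image.2 fun t ht => (hbounds t ht).1⟩
    ⟨φ M, forall_mem_image.2 fun t ht => (hbounds t ht).2⟩
  have hmeas : AEMeasurable (fun x => φ (f x)) μ :=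
    (hψ.measurable.comp_aemeasurable hf).congr (hfmM.mono fun x hx => (hφψ hx).symm)
  exact .of_mem_Icc (φ m) (φ M) hmeas (hfmM.mono fun x hx => hbounds _ hx)

variable {f φ : ℝ → ℝ} {a b : ℝ}

lemma le_two_mul_midpoint_of_concaveOn (hf : ConcaveOn ℝ (Icc a b) f)
    (hf0 : ∀ x ∈ Icc a b, 0 ≤ f x) {x : ℝ} (hx : x ∈ Icc a b) : f x ≤ 2 * f ((a + b) / 2) := by
  have hx' : a + b - x ∈ Icc a b := ⟨by linarith [hx.2], by linarith [hx.1]⟩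
  have hmid := hf.2 hx hx' (show (0 : ℝ) ≤ 1 / 2 by simp) (by simp) (add_halves 1)
  have hcenter : (1 / 2 : ℝ) • x + (1 / 2 : ℝ) • (a + b - x) = (a + b) / 2 := by
    simp only [smul_eq_mul]; ring
  rw [hcenter, smul_eq_mul, smul_eq_mul] at hmid
  linarith [hf0 _ hx']

lemma intervalIntegrable_comp_of_concaveOn (hab : a ≤ b) (hφ : MonotoneOn φ (Ici 0))
    (hf : ConcaveOn ℝ (Icc a b) f) (hf0 : ∀ x ∈ Icc a b, 0 ≤ f x) :
    IntervalIntegrable (fun x => φ (f x)) volume a b := by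
  rw [intervalIntegrable_iff_integrableOn_Icc_of_le hab]
  have hmeas : AEMeasurable f (volume.restrict (Icc a b)) := by
    simpa using (aemeasurable_restrict_of_convexOn hf.neg).neg
  exact integrable_comp_of_monotoneOn (hφ.mono Icc_subset_Ici_self) hmeas
    (ae_restrict_of_forall_mem measurableSet_Icc fun x hx =>
      ⟨hf0 x hx, le_two_mul_midpoint_of_concaveOn hf hf0 hx⟩)

lemma intervalIntegrable_comp_of_convexOn (hab : a ≤ b) (hφ : MonotoneOn φ (Ici 0))
    (hf : ConvexOn ℝ (Icc a b) f) (hf0 : ∀ x ∈ Icc a b, 0 ≤ f x) :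
    IntervalIntegrable (fun x => φ (f x)) volume a b := by
  rw [intervalIntegrable_iff_integrableOn_Icc_of_le hab]
  exact integrable_comp_of_monotoneOn (hφ.mono Icc_subset_Ici_self)
    (aemeasurable_restrict_of_convexOn hf)
    (ae_restrict_of_forall_mem measurableSet_Icc fun x hx =>
      ⟨hf0 x hx, hf.le_max_of_mem_Icc (left_mem_Icc.2 hab) (right_mem_Icc.2 hab) hx⟩)

end Integrability

theorem stmt_9_general {x₀ a b : ℝ} (hxa : x₀ ≤ a) (hab : a ≤ b) {g l φ w : ℝ → ℝ}
    (hg : ConcaveOn ℝ (Icc x₀ a) g) (hg0 : ∀ x ∈ Icc x₀ a, 0 ≤ g x)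
    (hl : ConvexOn ℝ (Icc x₀ b) l) (hl0 : ∀ x ∈ Icc x₀ b, 0 ≤ l x) (hlg : l x₀ ≤ g x₀)
    (hφ : MonotoneOn φ (Ici 0)) (hφ0 : 0 ≤ φ 0)
    (hw : MonotoneOn w (Icc x₀ b)) (hwc : ContinuousOn w (Icc x₀ b))
    (heq : ∫ x in x₀..a, φ (g x) = ∫ x in x₀..b, φ (l x)) :
    ∫ x in x₀..a, w x * φ (g x) ≤ ∫ x in x₀..b, w x * φ (l x) := by
  have hsub : Icc x₀ a ⊆ Icc x₀ b := Icc_subset_Icc_right hab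
  have hdiff : ConcaveOn ℝ (Icc x₀ a) (g - l) := hg.sub (hl.subset hsub (convex_Icc x₀ a))
  obtain ⟨c, hc, hbefore, hafter⟩ :=
    exists_crossing_of_quasiconcaveOn hxa hdiff.quasiconcaveOn (sub_nonneg.2 hlg)
  refine integral_mul_le_integral_mul_of_crossing hab hc
    (intervalIntegrable_comp_of_concaveOn hxa hφ hg hg0)
    (intervalIntegrable_comp_of_convexOn (hxa.trans hab) hφ hl hl0) hw hwc ?_ ?_ ?_ heq
  · intro x hx
    have hx_left : x ∈ Icc x₀ a := ⟨hx.1, hx.2.le.trans hc.2⟩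
    exact hφ (hl0 x (hsub hx_left)) (hg0 x hx_left) (sub_nonneg.1 (hbefore x hx))
  · intro x hx
    have hx_left : x ∈ Icc x₀ a := ⟨hc.1.trans hx.1.le, hx.2⟩
    exact hφ (hg0 x hx_left) (hl0 x (hsub hx_left)) (sub_neg.1 (hafter x hx)).le
  · intro x hx
    have hlx : 0 ≤ l x := hl0 x ⟨hxa.trans hx.1, hx.2⟩
    exact hφ0.trans (hφ self_mem_Ici hlx hlx)

/-- The barycenter shift inequality (3.4) in the proof of Lemma 3.4: for `a > 0`,
an integer `n ≥ 2`, and a nonnegative concave function `g` on `[0, a]` with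
`g 0 = 1`, if `b ≥ a` satisfies `∫_0^a g(x)^{n−1} dx = ∫_0^b (1 − x/b)^{n−1} dx`,
then `∫_0^a x·g(x)^{n−1} dx ≤ ∫_0^b x·(1 − x/b)^{n−1} dx`. -/
theorem stmt_9 (a b : ℝ) (ha : 0 < a) (hab : a ≤ b) (n : ℕ) (hn : 2 ≤ n)
    (g : ℝ → ℝ)
    (hconc : ConcaveOn ℝ (Set.Icc 0 a) g)
    (hnonneg : ∀ x ∈ Set.Icc (0 : ℝ) a, 0 ≤ g x)
    (hg0 : g 0 = 1)
    (hintegral : (∫ x in (0 : ℝ)..a, g x ^ (n - 1)) =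
      ∫ x in (0 : ℝ)..b, (1 - x / b) ^ (n - 1)) :
    (∫ x in (0 : ℝ)..a, x * g x ^ (n - 1)) ≤
      ∫ x in (0 : ℝ)..b, x * (1 - x / b) ^ (n - 1) := by
  have hb : 0 < b := ha.trans_le hab
  have hcone : ConvexOn ℝ (Icc 0 b) (fun x => 1 - x / b) :=
    (convexOn_const 1 (convex_Icc 0 b)).sub
      ((LinearMap.mulRight ℝ b⁻¹).concaveOn (convex_Icc 0 b))
  have hcone_nonneg : ∀ x ∈ Icc 0 b, 0 ≤ 1 - x / b := fun x hx =>
    sub_nonneg.2 ((div_le_one hb).2 hx.2)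
  exact stmt_9_general ha.le hab hconc hnonneg hcone hcone_nonneg (by simp [hg0])
    (pow_left_monotoneOn (n := n - 1)) (pow_nonneg le_rfl _) (monotone_id.monotoneOn _)
    continuousOn_id hintegral
end
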